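/- arXiv:0802.0959 — 8 statements merged into one kernel-verified Lean document; each statement's English description precedes it below -/
import Mathlib

section
/- Let k be an algebraically closed field of characteristic zero, let n ≥ 4, and let f ∈ k[x_0,…,x_n] be a squarefree homogeneous polynomial of degree d whose Hessian polynomial h_f is identically zero. If the transcendence degree over k of the k-subalgebra k[f_0,…,f_n] generated by the partial derivatives f_i = ∂f/∂x_i is at most 3 (equivalently, the polar image Z(f), the closure of the image of the polar map φ_f = (f_0 : … : f_n), has dimension at most 2), then the partial derivatives f_0,…,f_n are linearly dependent over k, i.e. V(f) is a cone. -/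
open MvPolynomial

/-- The Hessian polynomial of a multivariate polynomial: the determinant of the
matrix of second partial derivatives. -/
noncomputable def hessianDet {k : Type*} [CommRing k] {m : ℕ}
    (f : MvPolynomial (Fin m) k) : MvPolynomial (Fin m) k :=
  Matrix.det (Matrix.of fun i j => pderiv i (pderiv j f))

section GN
set_option linter.unusedSectionVars false
variable {k : Type*} [Field k] {σ : Type*} [Fintype σ]

lemma gn_chain {A : Type*} [CommRing A] [Algebra k A] (D : Derivation k A A) (g : σ → A)
    (G : MvPolynomial σ k) : D (aeval g G) = ∑ i, aeval g (pderiv i G) * D (g i) := by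
  classical
  induction G using MvPolynomial.induction_on with
  | C a => simp
  | add p q hp hq => simp [hp, hq, add_mul, Finset.sum_add_distrib]
  | mul_X p i hp =>
    simp only [map_mul, aeval_X, Derivation.leibniz, hp, smul_eq_mul, map_add, pderiv_X, add_mul,
      Finset.sum_add_distrib, Finset.mul_sum, Pi.single_apply]
    congr 1
    · rw [Finset.sum_eq_single i]
      · simp
      · intro b _ hb; simp [hb.symm]
      · simp
    · exact Finset.sum_congr rfl fun j _ => by ring

lemma gn_pderiv_comm (i j : σ) (f : MvPolynomial σ k) :
    pderiv i (pderiv j f) = pderiv j (pderiv i f) := by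
  classical
  have h : ⁅(pderiv i : Derivation k (MvPolynomial σ k) (MvPolynomial σ k)),
      (pderiv j : Derivation k (MvPolynomial σ k) (MvPolynomial σ k))⁆ = 0 := by
    apply derivation_ext
    intro l
    simp only [Derivation.commutator_apply, pderiv_X, Pi.single_apply]
    split_ifs <;> simp
  have := congrArg (fun D => D f) h
  simp only [Derivation.commutator_apply] at this
  exact sub_eq_zero.mp this

/-- The linear map sending a polynomial to its gradient at `y`. -/
noncomputable def gnGrad (y : σ → k) : MvPolynomial σ k →ₗ[k] (σ → k) :=
  LinearMap.pi fun i => (aeval y).toLinearMap ∘ₗ (pderiv i).toLinearMap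

/-- The space of gradients at `F p` of relations among the `F i`. -/
noncomputable def gnN (F : σ → MvPolynomial σ k) (p : σ → k) : Submodule k (σ → k) :=
  Submodule.map (gnGrad fun i => eval p (F i)) (LinearMap.ker (aeval F).toLinearMap)

lemma gn_eval_aeval (F : σ → MvPolynomial σ k) (p : σ → k) (G : MvPolynomial σ k) :
    eval p (aeval F G) = eval (fun i => eval p (F i)) G := by
  have : (aeval p).comp (aeval F) = (aeval (fun i => eval p (F i)) : MvPolynomial σ k →ₐ[k] k) := by
    ext i; simp [aeval_eq_eval]
  have := congrArg (fun D => D G) this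
  simpa [aeval_eq_eval] using this

lemma gn_mem {F : σ → MvPolynomial σ k} {p v : σ → k} :
    v ∈ gnN F p ↔ ∃ G : MvPolynomial σ k, aeval F G = 0 ∧
      v = fun i => eval p (aeval F (pderiv i G)) := by
  simp only [gnN, Submodule.mem_map, LinearMap.mem_ker, gn_eval_aeval]
  refine exists_congr fun G => and_congr Iff.rfl ?_
  rw [eq_comm]
  have : (gnGrad fun i => eval p (F i)) G =
    fun i => eval (fun i => eval p (F i)) (pderiv i G) := by
    ext i; simp [gnGrad, aeval_eq_eval]
  rw [this]

lemma gn_congr {F : σ → MvPolynomial σ k} {p q : σ → k}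
    (h : ∀ i, eval p (F i) = eval q (F i)) : gnN F p = gnN F q := by
  simp only [gnN, h]

/-- Restriction of a polynomial to a line. -/
noncomputable def gnLine (p v : σ → k) : MvPolynomial σ k →ₐ[k] Polynomial k :=
  aeval fun i => Polynomial.C (p i) + Polynomial.X * Polynomial.C (v i)

lemma gn_line_eval (p v : σ → k) (Q : MvPolynomial σ k) (t : k) :
    (gnLine p v Q).eval t = eval (p + t • v) Q := by
  have : (Polynomial.aeval t).comp (gnLine p v) = (aeval (p + t • v) : MvPolynomial σ k →ₐ[k] k) := by
    ext i; simp [gnLine]; exact mul_comm _ _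
  have := congrArg (fun D => D Q) this
  simpa [aeval_eq_eval, Polynomial.coe_aeval_eq_eval] using this

lemma gn_line_deriv (p v : σ → k) (Q : MvPolynomial σ k) :
    Polynomial.derivative (gnLine p v Q) = ∑ i, Polynomial.C (v i) * gnLine p v (pderiv i Q) := by
  have := gn_chain (Polynomial.derivative' (R := k))
    (fun i => Polynomial.C (p i) + Polynomial.X * Polynomial.C (v i)) Q
  simp only [Polynomial.derivative'_apply] at this
  simp only [gnLine, this]
  refine Finset.sum_congr rfl fun i _ => ?_
  rw [mul_comm]
  simp

lemma gn_tangent {F : σ → MvPolynomial σ k} {p v : σ → k} (hv : v ∈ gnN F p) (u : σ) :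
    ∑ i, v i * eval p (pderiv u (F i)) = 0 := by
  obtain ⟨G, hG, rfl⟩ := gn_mem.1 hv
  have := gn_chain (pderiv u) F G
  rw [hG, map_zero] at this
  have := congrArg (eval p) this
  simpa using this.symm

lemma gn_iter (D : Derivation k (MvPolynomial σ k) (MvPolynomial σ k)) {H : MvPolynomial σ k}
    (hH : D H = 0) (m : ℕ) (Q) : D^[m] (H * Q) = H * D^[m] Q := by
  induction m generalizing Q with
  | zero => rfl
  | succ m ih => simp [Function.iterate_succ_apply, hH, ih]

lemma gn_iter_sum (D : Derivation k (MvPolynomial σ k) (MvPolynomial σ k))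
    (m : ℕ) {ι : Type*} (s : Finset ι) (Q : ι → MvPolynomial σ k) :
    D^[m] (∑ i ∈ s, Q i) = ∑ i ∈ s, D^[m] (Q i) := by
  induction m generalizing Q with
  | zero => rfl
  | succ m ih => simp [Function.iterate_succ_apply, ih]

lemma gn_const [CharZero k] (f : MvPolynomial σ k) {p v : σ → k}
    (hv : v ∈ gnN (fun i => pderiv i f) p) (j : σ) (t : k) :
    eval (p + t • v) (pderiv j f) = eval p (pderiv j f) := by
  classical
  obtain ⟨G, hG, hv'⟩ := gn_mem.1 hv
  set F : σ → MvPolynomial σ k := fun i => pderiv i f with hF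
  set H : σ → MvPolynomial σ k := fun i => aeval F (pderiv i G) with hH
  let D : Derivation k (MvPolynomial σ k) (MvPolynomial σ k) := mkDerivation k H
  have hDapp : ∀ Q, D Q = ∑ i, H i * pderiv i Q := by
    intro Q
    have h1 := gn_chain D X Q
    rw [aeval_X_left] at h1
    simp only [AlgHom.id_apply] at h1
    rw [h1]
    exact Finset.sum_congr rfl fun i _ => by simp [D, mkDerivation_X, mul_comm]
  have hDF : ∀ i, D (F i) = 0 := by
    intro u
    have := gn_chain (pderiv u) F G
    rw [hG, map_zero] at this
    rw [hDapp, this]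
    exact Finset.sum_congr rfl fun i _ => by simp [hF, hH, gn_pderiv_comm u i]
  have hDH : ∀ i, D (H i) = 0 := by
    intro i
    rw [hH]
    simp only
    rw [gn_chain D F]
    simp [hDF]
  have key : ∀ m Q, (Polynomial.derivative^[m] (gnLine p v Q)).eval 0 = eval p (D^[m] Q) := by
    intro m
    induction m with
    | zero => intro Q; simp [gn_line_eval]
    | succ m ih =>
      intro Q
      rw [Function.iterate_succ_apply, Function.iterate_succ_apply, gn_line_deriv, hDapp,
        gn_iter_sum, Polynomial.iterate_derivative_sum, Polynomial.eval_finsetSum, map_sum]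
      refine Finset.sum_congr rfl fun i _ => ?_
      rw [gn_iter D (hDH i), Polynomial.iterate_derivative_C_mul, Polynomial.eval_mul, ih, map_mul,
        Polynomial.eval_C, hv']
  have hc : gnLine p v (F j) = Polynomial.C ((gnLine p v (F j)).coeff 0) := by
    ext m
    rcases m with _ | m
    · simp
    · have h1 := key (m+1) (F j)
      rw [Function.iterate_succ_apply D, hDF, iterate_map_zero, map_zero,
        ← Polynomial.coeff_zero_eq_eval_zero, Polynomial.coeff_iterate_derivative] at h1
      rw [Polynomial.coeff_C_succ]
      simp only [nsmul_eq_mul, mul_eq_zero, Nat.cast_eq_zero, zero_add] at h1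
      rcases h1 with h1 | h1
      · exact absurd h1 (by simp)
      · exact h1
  have h0 := gn_line_eval p v (F j) 0
  have h1 := gn_line_eval p v (F j) t
  rw [hc, Polynomial.eval_C] at h0 h1
  simpa [hF] using h1.symm.trans h0

lemma gn_scale_alg {f : MvPolynomial σ k} {e : ℕ} (h : f.IsHomogeneous e) (c : k) :
    aeval (fun i => C c * X i) f = C (c ^ e) * f := by
  conv_rhs => rw [f.as_sum]
  conv_lhs => rw [f.as_sum]
  rw [map_sum, Finset.mul_sum]
  refine Finset.sum_congr rfl fun m hm => ?_
  have : m.degree = e := by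
    by_contra hne
    exact mem_support_iff.mp hm (h.coeff_eq_zero hne)
  rw [aeval_monomial, Finsupp.prod_fintype _ _ (by simp), monomial_eq,
    Finsupp.prod_fintype _ _ (by simp)]
  simp only [mul_pow, Finset.prod_mul_distrib, algebraMap_eq, Finset.prod_pow_eq_pow_sum]
  rw [← this, Finsupp.degree_eq_sum]
  simp; ring

lemma gn_scale {f : MvPolynomial σ k} {e : ℕ} (h : f.IsHomogeneous e) (c : k) (p : σ → k) :
    eval (c • p) f = c ^ e * eval p f := by
  have := congrArg (eval p) (gn_scale_alg h c)
  rw [gn_eval_aeval] at this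
  have h2 : (fun i => eval p (C c * X i)) = c • p := by ext i; simp
  rw [h2] at this
  simpa using this

lemma gn_N_scale_le {F : σ → MvPolynomial σ k} {e : ℕ} (h : ∀ i, (F i).IsHomogeneous e) {c : k}
    (hc : c ≠ 0) (p : σ → k) : gnN F (c • p) ≤ gnN F p := by
  intro v hv
  obtain ⟨G, hG, rfl⟩ := gn_mem.1 hv
  have hce : c ^ e ≠ 0 := pow_ne_zero _ hc
  have hkey : ∀ Q : MvPolynomial σ k, aeval F (aeval (fun i => C (c^e) * X i) Q : MvPolynomial σ k) =
      aeval (fun i => C c * X i) (aeval F Q) := by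
    intro Q
    have : (aeval F).comp (aeval (fun i => C (c^e) * X i : σ → MvPolynomial σ k)) =
      ((aeval (fun i => C c * X i)).comp (aeval F) : MvPolynomial σ k →ₐ[k] MvPolynomial σ k) := by
      ext1 i
      simp only [AlgHom.comp_apply, aeval_X, map_mul, gn_scale_alg (h i), algHom_C, algebraMap_eq]
    exact congrArg (fun D => D Q) this
  have : c ^ e • (fun i => eval (c • p) (aeval F (pderiv i G))) ∈ gnN F p := by
    refine gn_mem.2 ⟨aeval (fun i => C (c^e) * X i) G, ?_, ?_⟩
    · rw [hkey, hG, map_zero]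
    · classical
      funext i
      rw [gn_chain (pderiv i)]
      rw [Finset.sum_eq_single i]
      · simp only [map_mul, hkey, pderiv_C_mul, pderiv_X_self, Pi.smul_apply]
        rw [gn_eval_aeval (fun i => C c * X i) p]
        have : (fun i => eval p (C c * X i)) = c • p := by ext i; simp
        rw [this]
        simp [mul_comm]
      · intro b _ hb
        rw [pderiv_C_mul, pderiv_X_of_ne hb]; simp
      · simp
  exact (Submodule.smul_mem_iff _ hce).1 this

lemma gn_N_scale {F : σ → MvPolynomial σ k} {e : ℕ} (h : ∀ i, (F i).IsHomogeneous e) {c : k}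
    (hc : c ≠ 0) (p : σ → k) : gnN F (c • p) = gnN F p := by
  refine le_antisymm (gn_N_scale_le h hc p) ?_
  have := gn_N_scale_le h (inv_ne_zero hc) (c • p)
  rwa [smul_smul, inv_mul_cancel₀ hc, one_smul] at this

lemma gn_perp [CharZero k] {F : σ → MvPolynomial σ k} {e : ℕ} (h : ∀ i, (F i).IsHomogeneous e)
    (he : e ≠ 0) {p v : σ → k} (hv : v ∈ gnN F p) : ∑ i, v i * eval p (F i) = 0 := by
  have h1 : ∀ i, ∑ u, p u * eval p (pderiv u (F i)) = e * eval p (F i) := by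
    intro i
    have := congrArg (eval p) (h i).sum_X_mul_pderiv
    simpa using this
  have h2 : (e : k) * ∑ i, v i * eval p (F i) = 0 := by
    calc (e : k) * ∑ i, v i * eval p (F i) = ∑ i, v i * (e * eval p (F i)) := by
          rw [Finset.mul_sum]; exact Finset.sum_congr rfl fun i _ => by ring
      _ = ∑ i, ∑ u, p u * (v i * eval p (pderiv u (F i))) := by
          refine Finset.sum_congr rfl fun i _ => ?_
          rw [← h1, Finset.mul_sum]; exact Finset.sum_congr rfl fun i _ => by ring
      _ = ∑ u, p u * ∑ i, v i * eval p (pderiv u (F i)) := by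
          rw [Finset.sum_comm]; simp only [Finset.mul_sum]
      _ = 0 := by simp [gn_tangent hv]
  exact (mul_eq_zero.1 h2).resolve_left (by exact_mod_cast he)


lemma gn_exists_eval_ne [CharZero k] {Q : MvPolynomial σ k} (h : Q ≠ 0) : ∃ p, eval p Q ≠ 0 := by
  by_contra hh
  push Not at hh
  exact h (MvPolynomial.funext fun p => by simp [hh p])

lemma gn_zero_of_open [CharZero k] {Δ Q : MvPolynomial σ k} (hΔ : Δ ≠ 0)
    (h : ∀ p, eval p Δ ≠ 0 → eval p Q = 0) : Q = 0 := by
  have : Δ * Q = 0 := MvPolynomial.funext fun p => by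
    by_cases hp : eval p Δ = 0
    · simp [hp]
    · simp [h p hp]
  exact (mul_eq_zero.1 this).resolve_left hΔ

lemma gn_open (F : σ → MvPolynomial σ k) (p₀ : σ → k) :
    ∃ Δ : MvPolynomial σ k, Δ ≠ 0 ∧ ∀ p, eval p Δ ≠ 0 →
      Module.finrank k (gnN F p₀) ≤ Module.finrank k (gnN F p) := by
  classical
  set a := Module.finrank k (gnN F p₀) with ha
  let b := Module.finBasis k (gnN F p₀)
  have hb : ∀ l, ∃ G : MvPolynomial σ k, aeval F G = 0 ∧
      ((b l : gnN F p₀) : σ → k) = fun i => eval p₀ (aeval F (pderiv i G)) :=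
    fun l => gn_mem.1 (b l).2
  choose G hG hGb using hb
  let w : (σ → k) → Fin a → (σ → k) := fun p l i => eval p (aeval F (pderiv i (G l)))
  have hw : ∀ p l, w p l ∈ gnN F p := fun p l => gn_mem.2 ⟨G l, hG l, rfl⟩
  have hind : LinearIndependent k (w p₀) := by
    have : w p₀ = fun l => ((b l : gnN F p₀) : σ → k) := by
      funext l; rw [hGb l]
    rw [this]
    exact b.linearIndependent.map' (gnN F p₀).subtype (by simp)
  have hinj : LinearMap.ker (Fintype.linearCombination k (w p₀)) = ⊥ := by
    exact LinearMap.ker_eq_bot.2 hind.fintypeLinearCombination_injective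
  obtain ⟨L, hL⟩ := LinearMap.exists_leftInverse_of_injective _ hinj
  have hL1 : ∀ l, L (w p₀ l) = Pi.single l 1 := by
    intro l
    have := congrArg (fun T => T (Pi.single l 1)) hL
    simpa [Fintype.linearCombination_apply_single] using this
  let M : Matrix (Fin a) (Fin a) (MvPolynomial σ k) := Matrix.of fun l m =>
    ∑ i, C (L (Pi.single i 1) m) * aeval F (pderiv i (G l))
  have hM : ∀ p, M.map (eval p) = Matrix.of fun l => L (w p l) := by
    intro p
    ext l m
    have : w p l = ∑ i, (w p l i) • (Pi.single i 1 : σ → k) := by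
      ext j; simp [Finset.sum_apply, Pi.single_apply]
    simp only [Matrix.map_apply, M, Matrix.of_apply, map_sum, map_mul, eval_C]
    rw [this, map_sum, Finset.sum_apply]
    refine Finset.sum_congr rfl fun i _ => ?_
    rw [map_smul, Pi.smul_apply, smul_eq_mul, mul_comm]
  have hdet : ∀ p, eval p M.det = (Matrix.of fun l => L (w p l)).det := by
    intro p
    rw [← hM, RingHom.map_det]; rfl
  refine ⟨M.det, ?_, ?_⟩
  · intro h0
    have h1 := hdet p₀
    rw [h0, map_zero] at h1
    have : (Matrix.of fun l => L (w p₀ l)) = (1 : Matrix (Fin a) (Fin a) k) := by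
      ext l m
      simp [hL1, Matrix.one_apply, Pi.single_apply, eq_comm]
    rw [this, Matrix.det_one] at h1
    exact zero_ne_one h1
  · intro p hp
    rw [hdet] at hp
    have h1 := Matrix.linearIndependent_rows_of_det_ne_zero hp
    have h2 : LinearIndependent k (w p) := LinearIndependent.of_comp L h1
    have h3 : LinearIndependent k (fun l => (⟨w p l, hw p l⟩ : gnN F p)) :=
      LinearIndependent.of_comp (gnN F p).subtype h2
    simpa using h3.fintype_card_le_finrank

lemma gn_totalDegree_pderiv {G : MvPolynomial σ k} {j : σ} (h : pderiv j G ≠ 0) :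
    (pderiv j G).totalDegree < G.totalDegree := by
  classical
  obtain ⟨m, hm, hmd⟩ : ∃ m ∈ (pderiv j G).support, (pderiv j G).totalDegree = m.degree := by
    obtain ⟨m, hm, h2⟩ := Finset.exists_mem_eq_sup (pderiv j G).support
      (support_nonempty.2 h) (fun s => s.sum fun _ e => e)
    exact ⟨m, hm, h2⟩
  rw [hmd]
  rw [mem_support_iff, coeff_pderiv] at hm
  have h1 : m + Finsupp.single j 1 ∈ G.support := mem_support_iff.2 (left_ne_zero_of_mul hm)
  have h2 := le_totalDegree h1
  change (m + Finsupp.single j 1).degree ≤ _ at h2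
  rw [map_add, Finsupp.degree_single] at h2
  omega

lemma gn_notMem_vars [CharZero k] {G : MvPolynomial σ k} {j : σ} (h : pderiv j G = 0) :
    j ∉ G.vars := by
  classical
  rw [mem_vars_iff_mem_support]
  rintro ⟨m, hm, hj⟩
  have h1 := coeff_pderiv (i := j) G (m - Finsupp.single j 1)
  have hmj : m j ≠ 0 := Finsupp.mem_support_iff.1 hj
  have hle : Finsupp.single j 1 ≤ m := by
    rw [Finsupp.single_le_iff]; omega
  rw [h, coeff_zero, tsub_add_cancel_of_le hle] at h1
  have h2 := mem_support_iff.1 hm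
  rcases mul_eq_zero.1 h1.symm with h3 | h3
  · exact h2 h3
  · exact Nat.cast_add_one_ne_zero _ h3

lemma gn_rel [CharZero k] (F : σ → MvPolynomial σ k) (S : Set σ) (j : σ)
    (hS : ∀ G ∈ supported k S, aeval F G = 0 → G = 0)
    (hj : ∃ G ∈ supported k (insert j S), aeval F G = 0 ∧ G ≠ 0) :
    ∃ G ∈ supported k (insert j S), aeval F G = 0 ∧ aeval F (pderiv j G) ≠ 0 := by
  classical
  have hex : ∃ d, ∃ G ∈ supported k (insert j S), aeval F G = 0 ∧ G ≠ 0 ∧ G.totalDegree = d := by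
    obtain ⟨G, h1, h2, h3⟩ := hj
    exact ⟨_, G, h1, h2, h3, rfl⟩
  obtain ⟨G, h1, h2, h3, h4⟩ := Nat.find_spec hex
  refine ⟨G, h1, h2, fun h5 => ?_⟩
  by_cases h6 : pderiv j G = 0
  · have h7 := gn_notMem_vars h6
    refine h3 (hS G ?_ h2)
    rw [mem_supported] at h1 ⊢
    intro i hi
    rcases h1 hi with rfl | h
    · exact absurd hi h7
    · exact h
  · have h8 := gn_totalDegree_pderiv h6
    rw [h4] at h8
    refine Nat.find_min hex h8 ⟨_, ?_, h5, h6, rfl⟩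
    rw [mem_supported] at h1 ⊢
    intro i hi
    rw [Finset.mem_coe, mem_vars_iff_mem_support] at hi
    obtain ⟨m, hm, hi⟩ := hi
    rw [mem_support_iff, coeff_pderiv] at hm
    have h9 : m + Finsupp.single j 1 ∈ G.support := mem_support_iff.2 (left_ne_zero_of_mul hm)
    apply h1
    rw [Finset.mem_coe, mem_vars_iff_mem_support]
    refine ⟨_, h9, ?_⟩
    rw [Finsupp.mem_support_iff] at hi ⊢
    simp [hi]

lemma gn_dim [CharZero k] (F : σ → MvPolynomial σ k)
    (htr : ∀ s : Fin 4 → MvPolynomial σ k,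
      (∀ i, s i ∈ Algebra.adjoin k (Set.range F)) → ¬ AlgebraicIndependent k s) :
    ∃ p, Fintype.card σ ≤ Module.finrank k (gnN F p) + 3 := by
  classical
  let P : Finset σ → Prop := fun S => ∀ G ∈ supported k (S : Set σ), aeval F G = 0 → G = 0
  have hP : ∀ S : Finset σ, P S → S.card ≤ 3 := by
    intro S hS
    by_contra hcard
    push Not at hcard
    obtain ⟨T, hTS, hT⟩ := Finset.exists_subset_card_eq (show 4 ≤ S.card from hcard)
    have hind : AlgebraicIndependent k (F ∘ ((↑) : ((S : Set σ) : Type _) → σ)) :=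
      algebraicIndependent_comp_subtype.2 hS
    let e : Fin 4 ≃ T := (Fintype.equivFinOfCardEq (by simpa using hT)).symm
    let g : Fin 4 → ((S : Set σ) : Type _) := fun i => ⟨(e i).1, hTS (e i).2⟩
    have hg : Function.Injective g := by
      intro i i' h
      apply e.injective
      apply Subtype.ext
      have h2 : (g i).1 = (g i').1 := by rw [h]
      exact h2
    refine htr _ ?_ (hind.comp g hg)
    intro i
    exact Algebra.subset_adjoin ⟨_, rfl⟩
  have hPe : P ∅ := by
    intro G hG h0
    rw [Finset.coe_empty, supported_empty, Algebra.mem_bot] at hG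
    obtain ⟨c, rfl⟩ := hG
    simpa [algebraMap_eq] using h0
  obtain ⟨S, hS, hmax⟩ := Finset.exists_max_image (Finset.univ.filter P) Finset.card
    ⟨∅, by simp [hPe]⟩
  have hPS : P S := (Finset.mem_filter.1 hS).2
  have hrel : ∀ j : {j // j ∉ S}, ∃ G ∈ supported k (insert j.1 (S : Set σ)), aeval F G = 0 ∧
      aeval F (pderiv j.1 G) ≠ 0 := by
    intro j
    refine gn_rel F S j.1 hPS ?_
    by_contra hno
    push Not at hno
    have : P (insert j.1 S) := by
      intro G hG h0
      rw [Finset.coe_insert] at hG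
      exact hno G hG h0
    have := hmax _ (Finset.mem_filter.2 ⟨Finset.mem_univ _, this⟩)
    rw [Finset.card_insert_of_notMem j.2] at this
    omega
  choose G hG1 hG2 hG3 using hrel
  obtain ⟨p, hp⟩ := gn_exists_eval_ne (Finset.prod_ne_zero_iff.2 fun j (_ : j ∈ Finset.univ) => hG3 j)
  rw [map_prod, Finset.prod_ne_zero_iff] at hp
  refine ⟨p, ?_⟩
  let w : {j // j ∉ S} → gnN F p := fun j =>
    ⟨fun i => eval p (aeval F (pderiv i (G j))), gn_mem.2 ⟨G j, hG2 j, rfl⟩⟩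
  have hw : LinearIndependent k w := by
    rw [Fintype.linearIndependent_iff]
    intro c hc j
    have h1 := congrArg (fun v : gnN F p => (v : σ → k) j.1) hc
    simp only [Submodule.coe_sum, Submodule.coe_smul, Finset.sum_apply, Pi.smul_apply,
      smul_eq_mul, Submodule.coe_zero, Pi.zero_apply, w] at h1
    rw [Finset.sum_eq_single j] at h1
    · exact (mul_eq_zero.1 h1).resolve_right (hp j (Finset.mem_univ _))
    · intro l _ hl
      have : j.1 ∉ (G l).vars := by
        intro hjl
        rcases (mem_supported.1 (hG1 l)) hjl with h | h
        · exact hl (Subtype.ext h.symm)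
        · exact j.2 h
      rw [pderiv_eq_zero_of_notMem_vars this]; simp
    · simp
  have h1 := hw.fintype_card_le_finrank
  have h2 : Fintype.card {j // j ∉ S} = Fintype.card σ - S.card := by
    rw [Fintype.card_subtype_compl]; simp
  have h3 := hP S hPS
  omega

lemma gn_wronski [CharZero k] {A B : Polynomial k} (h : Polynomial.derivative A * B =
    A * Polynomial.derivative B) (hA : A.eval 0 = 0) (hB : B.eval 0 ≠ 0) : A = 0 := by
  by_contra hA0
  have h1 := Polynomial.derivative_rootMultiplicity_of_root (p := A) (t := 0) hA
  have hm : 0 < A.rootMultiplicity 0 := (Polynomial.rootMultiplicity_pos hA0).2 hA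
  have hB0 : B ≠ 0 := by rintro rfl; simp at hB
  have hA' : Polynomial.derivative A ≠ 0 := by
    intro h0
    have := Polynomial.derivative_eq_zero.1 h0
    rw [Polynomial.eq_C_of_natDegree_eq_zero this] at hA hA0
    simp at hA
    simp [hA] at hA0
  have hBm : B.rootMultiplicity 0 = 0 := Polynomial.rootMultiplicity_eq_zero hB
  have h2 : (Polynomial.derivative A * B).rootMultiplicity 0 = A.rootMultiplicity 0 - 1 := by
    rw [Polynomial.rootMultiplicity_mul (mul_ne_zero hA' hB0), h1, hBm, add_zero]
  have hne : A * Polynomial.derivative B ≠ 0 := by rw [← h]; exact mul_ne_zero hA' hB0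
  rw [h, Polynomial.rootMultiplicity_mul hne] at h2
  omega

lemma gn_prop [CharZero k] {g h : MvPolynomial σ k}
    (hgh : ∀ u, pderiv u g * h = g * pderiv u h) :
    ∃ a b : k, (a ≠ 0 ∨ b ≠ 0) ∧ a • g + b • h = 0 := by
  by_cases hh : h = 0
  · exact ⟨0, 1, by simp, by simp [hh]⟩
  obtain ⟨p, hp⟩ := gn_exists_eval_ne hh
  set c := eval p g / eval p h with hc
  refine ⟨1, -c, by simp, ?_⟩
  set g' := (1 : k) • g + (-c) • h with hg'
  have hg'h : ∀ u, pderiv u g' * h = g' * pderiv u h := by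
    intro u
    simp only [hg', map_add, Derivation.map_smul, add_mul, smul_mul_assoc, hgh u]
    rw [mul_comm (pderiv u h) h]
  have hgp : eval p g' = 0 := by
    simp [hg', hc, smul_eval]
    field_simp
    ring
  apply MvPolynomial.funext
  intro q
  have key : gnLine p (q - p) g' = 0 := by
    apply gn_wronski (B := gnLine p (q - p) h)
    · rw [gn_line_deriv, gn_line_deriv, Finset.sum_mul, Finset.mul_sum]
      refine Finset.sum_congr rfl fun i _ => ?_
      rw [mul_assoc, ← map_mul, hg'h, map_mul]; ring
    · rw [gn_line_eval]; simpa using hgp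
    · rw [gn_line_eval]; simpa using hp
  have := gn_line_eval p (q - p) g' 1
  rw [key] at this
  simpa using this.symm

lemma gn_combin {V : Type*} [AddCommGroup V] [Module k V] [FiniteDimensional k V] {ι : Type*}
    (N : ι → Submodule k V) (a : ℕ) (hdim : ∀ p, Module.finrank k (N p) = a)
    (hint : ∀ p q, N p ≠ N q → a ≤ Module.finrank k (N p ⊓ N q : Submodule k V) + 1) :
    (∀ p q, N p = N q) ∨ (∃ D : Submodule k V, a ≤ Module.finrank k D + 1 ∧ ∀ p, D ≤ N p) ∨
      ∃ E : Submodule k V, Module.finrank k E = a + 1 ∧ ∀ p, N p ≤ E := by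
  have hlt : ∀ p q, N p ≠ N q → Module.finrank k (N p ⊓ N q : Submodule k V) < a := by
    intro p q h
    rw [← hdim p]
    apply Submodule.finrank_lt_finrank_of_lt
    refine lt_of_le_of_ne inf_le_left fun h1 => h ?_
    exact Submodule.eq_of_le_of_finrank_eq (inf_eq_left.1 h1) (by rw [hdim, hdim])
  by_cases hall : ∀ p q, N p = N q
  · exact Or.inl hall
  right
  push Not at hall
  obtain ⟨p, q, hpq⟩ := hall
  set D := N p ⊓ N q with hD
  set E := N p ⊔ N q with hE
  have hDdim : Module.finrank k D + 1 = a := by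
    have h1 := hlt p q hpq
    have h2 := hint p q hpq
    rw [← hD] at h1 h2
    omega
  have hEdim : Module.finrank k E = a + 1 := by
    have := Submodule.finrank_sup_add_finrank_inf_eq (N p) (N q)
    rw [hdim, hdim, ← hD, ← hE] at this
    omega
  have hDE : ∀ r, D ≤ N r ∨ N r ≤ E := by
    intro r
    by_contra hcon
    push Not at hcon
    obtain ⟨h1, h2⟩ := hcon
    have hrp : N r ≠ N p := fun h => h1 (h ▸ inf_le_left)
    have hrq : N r ≠ N q := fun h => h1 (h ▸ inf_le_right)
    have i1 := hint r p hrp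
    have i2 := hint r q hrq
    by_cases h3 : N r ⊓ N p ≤ N q
    · have h4 : N r ⊓ N p ≤ D := le_inf inf_le_right h3
      have h5 : N r ⊓ N p = D := Submodule.eq_of_le_of_finrank_le h4 (by omega)
      exact h1 (h5 ▸ inf_le_left)
    · have h4 : N r ⊓ N q < (N r ⊓ N p) ⊔ (N r ⊓ N q) := by
        refine lt_of_le_of_ne le_sup_right fun h => h3 ?_
        exact (le_sup_left.trans h.symm.le).trans inf_le_right
      have h5 := Submodule.finrank_lt_finrank_of_lt h4
      have h6 : (N r ⊓ N p) ⊔ (N r ⊓ N q) = N r :=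
        Submodule.eq_of_le_of_finrank_le (sup_le inf_le_left inf_le_left) (by rw [hdim]; omega)
      apply h2
      rw [← h6]
      exact sup_le (inf_le_right.trans le_sup_left) (inf_le_right.trans le_sup_right)
  by_cases hallD : ∀ r, D ≤ N r
  · exact Or.inl ⟨D, by omega, hallD⟩
  right
  push Not at hallD
  obtain ⟨r, hr⟩ := hallD
  refine ⟨E, hEdim, fun s => ?_⟩
  by_contra hs
  have hDs := (hDE s).resolve_right hs
  have hrE := (hDE r).resolve_left hr
  have hsr : N s ≠ N r := fun h => hs (h ▸ hrE)
  have h1 : N s ⊓ E < N s := lt_of_le_of_ne inf_le_left fun h => hs (inf_eq_left.1 h)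
  have h2 := Submodule.finrank_lt_finrank_of_lt h1
  rw [hdim] at h2
  have h3 : D = N s ⊓ E := Submodule.eq_of_le_of_finrank_le
    (le_inf hDs (inf_le_left.trans le_sup_left)) (by omega)
  have h4 : N s ⊓ N r ≤ D := h3 ▸ inf_le_inf_left _ hrE
  have h5 : N s ⊓ N r = D := Submodule.eq_of_le_of_finrank_le h4 (by
    have := hint s r hsr; omega)
  exact hr (h5 ▸ inf_le_right)


lemma gn_zero_at [CharZero k] (f : MvPolynomial σ k) {e : ℕ} (he : e ≠ 0)
    (hF : ∀ i, (pderiv i f).IsHomogeneous e) {q w : σ → k}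
    (hw : w ∈ gnN (fun i => pderiv i f) q) (i : σ) : eval w (pderiv i f) = 0 := by
  have h : Polynomial.X * (gnLine w q (pderiv i f) -
      Polynomial.C (eval q (pderiv i f)) * Polynomial.X ^ e) = 0 := by
    apply Polynomial.funext
    intro t
    by_cases ht : t = 0
    · simp [ht]
    · have hw' : w ∈ gnN (fun i => pderiv i f) (t • q) := by rwa [gn_N_scale hF ht]
      have := gn_const f hw' i 1
      rw [one_smul, gn_scale (hF i), add_comm] at this
      rw [Polynomial.eval_mul, Polynomial.eval_sub, gn_line_eval, this]
      simp only [Polynomial.eval_mul, Polynomial.eval_C, Polynomial.eval_pow, Polynomial.eval_X,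
        Polynomial.eval_zero]
      ring
  have h2 := (mul_eq_zero.1 h).resolve_left Polynomial.X_ne_zero
  have h3 := congrArg (Polynomial.eval 0) h2
  simpa [gn_line_eval, he] using h3

lemma gn_pair {E M : Submodule k (σ → k)} (hME : M ≤ E)
    (hdim : Module.finrank k E = Module.finrank k M + 1) {e₁ e₂ : σ → k} (h1 : e₁ ∈ E)
    (h2 : e₂ ∈ E) : ∃ α β : k, (α ≠ 0 ∨ β ≠ 0) ∧ α • e₁ + β • e₂ ∈ M := by
  by_cases h : e₁ ∈ M
  · exact ⟨1, 0, by simp, by simpa using h⟩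
  have hlt : M < M ⊔ Submodule.span k {e₁} := by
    refine lt_of_le_of_ne le_sup_left fun heq => h ?_
    rw [heq]
    exact Submodule.mem_sup_right (Submodule.mem_span_singleton_self _)
  have h3 := Submodule.finrank_lt_finrank_of_lt hlt
  have h4 : M ⊔ Submodule.span k {e₁} = E := Submodule.eq_of_le_of_finrank_le
    (sup_le hME ((Submodule.span_singleton_le_iff_mem _ _).2 h1)) (by omega)
  rw [← h4] at h2
  obtain ⟨w, hw, z, hz, hwz⟩ := Submodule.mem_sup.1 h2
  obtain ⟨c, rfl⟩ := Submodule.mem_span_singleton.1 hz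
  refine ⟨-c, 1, by simp, ?_⟩
  rw [← hwz]
  simpa using hw

lemma gn_main [CharZero k] (f : MvPolynomial σ k) {e : ℕ} (he : e ≠ 0)
    (hF : ∀ i, (pderiv i f).IsHomogeneous e) (hcard : 5 ≤ Fintype.card σ)
    (htr : ∀ s : Fin 4 → MvPolynomial σ k,
      (∀ i, s i ∈ Algebra.adjoin k (Set.range fun j => pderiv j f)) → ¬ AlgebraicIndependent k s) :
    ∃ c : σ → k, c ≠ 0 ∧ ∑ i, c i • pderiv i f = 0 := by
  classical
  set F : σ → MvPolynomial σ k := fun i => pderiv i f with hFdef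
  by_cases hall0 : ∀ i, F i = 0
  · obtain ⟨i⟩ : Nonempty σ := Fintype.card_pos_iff.1 (by omega)
    refine ⟨Pi.single i 1, by simp, ?_⟩
    exact Finset.sum_eq_zero fun j _ => by
      have := hall0 j
      simp only [hFdef] at this
      simp [this]
  push Not at hall0
  obtain ⟨i₀, hi₀⟩ := hall0
  obtain ⟨p₀, hmax⟩ : ∃ p₀, ∀ p, Module.finrank k (gnN F p) ≤ Module.finrank k (gnN F p₀) := by
    have hb : BddAbove (Set.range fun p => Module.finrank k (gnN F p)) := by
      refine ⟨Fintype.card σ, ?_⟩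
      rintro _ ⟨p, rfl⟩
      simpa using Submodule.finrank_le (gnN F p)
    obtain ⟨p₀, h0⟩ := Nat.sSup_mem (Set.range_nonempty _) hb
    refine ⟨p₀, fun p => ?_⟩
    simp only at h0
    rw [h0]
    exact le_csSup hb ⟨p, rfl⟩
  set a := Module.finrank k (gnN F p₀) with ha
  have ha3 : Fintype.card σ ≤ a + 3 := by
    obtain ⟨p, hp⟩ := gn_dim F htr
    have := hmax p
    omega
  obtain ⟨Δ₀, hΔ₀, hΔ₁⟩ := gn_open F p₀
  let Δ := Δ₀ * F i₀
  have hΔ : Δ ≠ 0 := mul_ne_zero hΔ₀ hi₀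
  let U := {p : σ → k // eval p Δ ≠ 0}
  have hUdim : ∀ p : U, Module.finrank k (gnN F p.1) = a := by
    intro p
    refine le_antisymm (hmax _) (hΔ₁ _ ?_)
    have := p.2
    simp only [Δ, map_mul] at this
    exact left_ne_zero_of_mul this
  have hUF : ∀ p : U, eval p.1 (F i₀) ≠ 0 := by
    intro p
    have := p.2
    simp only [Δ, map_mul] at this
    exact right_ne_zero_of_mul this
  have hmove : ∀ (p : U) (c : k) (v : σ → k), c ≠ 0 → v ∈ gnN F p.1 →
      gnN F (c • p.1 + v) = gnN F p.1 ∧ eval (c • p.1 + v) (F i₀) ≠ 0 := by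
    intro p c v hc hv
    have hv' : v ∈ gnN F (c • p.1) := by rwa [gn_N_scale hF hc]
    have h1 : ∀ i, eval (c • p.1 + v) (F i) = eval (c • p.1) (F i) := by
      intro i
      have := gn_const f hv' i 1
      rwa [one_smul] at this
    refine ⟨(gn_congr h1).trans (gn_N_scale hF hc _), ?_⟩
    rw [h1, gn_scale (hF i₀)]
    exact mul_ne_zero (pow_ne_zero _ hc) (hUF p)
  have hP : ∀ p : U, a + 1 ≤
      Module.finrank k (gnN F p.1 ⊔ Submodule.span k {p.1} : Submodule k (σ → k)) := by
    intro p
    rw [← hUdim p]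
    apply Submodule.finrank_lt_finrank_of_lt
    refine lt_of_le_of_ne le_sup_left fun heq => hUF p ?_
    refine gn_zero_at f he hF (q := p.1) ?_ i₀
    change p.1 ∈ gnN F p.1
    rw [heq]
    exact Submodule.mem_sup_right (Submodule.mem_span_singleton_self _)
  have hint : ∀ p q : U, gnN F p.1 ≠ gnN F q.1 →
      a ≤ Module.finrank k (gnN F p.1 ⊓ gnN F q.1 : Submodule k (σ → k)) + 1 := by
    intro p q hpq
    have hle : (gnN F p.1 ⊔ Submodule.span k {p.1}) ⊓ (gnN F q.1 ⊔ Submodule.span k {q.1}) ≤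
        gnN F p.1 ⊓ gnN F q.1 := by
      rintro x ⟨hx1, hx2⟩
      obtain ⟨v, hv, z, hz, hx1⟩ := Submodule.mem_sup.1 hx1
      obtain ⟨c, rfl⟩ := Submodule.mem_span_singleton.1 hz
      obtain ⟨w, hw, z, hz, hx2⟩ := Submodule.mem_sup.1 hx2
      obtain ⟨c', rfl⟩ := Submodule.mem_span_singleton.1 hz
      rw [add_comm] at hx1 hx2
      by_cases hc : c = 0
      · by_cases hc' : c' = 0
        · rw [hc, zero_smul, zero_add] at hx1
          rw [hc', zero_smul, zero_add] at hx2
          exact ⟨hx1 ▸ hv, hx2 ▸ hw⟩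
        · exfalso
          have h2 := (hmove q c' w hc' hw).2
          rw [hx2, ← hx1, hc, zero_smul, zero_add] at h2
          exact h2 (gn_zero_at f he hF hv i₀)
      · exfalso
        obtain ⟨h1, h2⟩ := hmove p c v hc hv
        by_cases hc' : c' = 0
        · rw [hx1, ← hx2, hc', zero_smul, zero_add] at h2
          exact h2 (gn_zero_at f he hF hw i₀)
        · obtain ⟨h3, -⟩ := hmove q c' w hc' hw
          apply hpq
          rw [← h1, ← h3, hx1, hx2]
    have h1 := Submodule.finrank_sup_add_finrank_inf_eq
      (gnN F p.1 ⊔ Submodule.span k {p.1}) (gnN F q.1 ⊔ Submodule.span k {q.1})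
    have h2 := Submodule.finrank_mono hle
    have h3 := Submodule.finrank_le
      ((gnN F p.1 ⊔ Submodule.span k {p.1}) ⊔ (gnN F q.1 ⊔ Submodule.span k {q.1}))
    rw [Module.finrank_fintype_fun_eq_card] at h3
    have h4 := hP p
    have h5 := hP q
    omega
  -- a common nonzero vector finishes
  have hfin : ∀ v : σ → k, v ≠ 0 → (∀ p : U, v ∈ gnN F p.1) →
      ∃ c : σ → k, c ≠ 0 ∧ ∑ i, c i • pderiv i f = 0 := by
    intro v hv hvp
    refine ⟨v, hv, gn_zero_of_open hΔ fun p hp => ?_⟩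
    have := gn_perp hF he (hvp ⟨p, hp⟩)
    simpa [smul_eval] using this
  rcases gn_combin (fun p : U => gnN F p.1) a hUdim hint with h | ⟨D, hD, hDp⟩ | ⟨E, hE, hEp⟩
  · obtain ⟨p₁, hp₁⟩ := gn_exists_eval_ne hΔ
    let P : U := ⟨p₁, hp₁⟩
    have hpos : gnN F p₁ ≠ ⊥ := by
      intro h0
      have := hUdim P
      rw [show P.1 = p₁ from rfl, h0, finrank_bot] at this
      omega
    obtain ⟨v, hv, hv0⟩ := Submodule.exists_mem_ne_zero_of_ne_bot hpos
    exact hfin v hv0 fun p => (h P p) ▸ hv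
  · have hpos : D ≠ ⊥ := by
      rintro rfl
      rw [finrank_bot] at hD
      omega
    obtain ⟨v, hv, hv0⟩ := Submodule.exists_mem_ne_zero_of_ne_bot hpos
    exact hfin v hv0 fun p => hDp p hv
  · obtain ⟨x, hx0⟩ : ∃ x : E, x ≠ 0 := by
      have : Nontrivial E := Module.nontrivial_of_finrank_pos (R := k) (by omega)
      exact exists_ne 0
    obtain ⟨y, hxy⟩ := exists_linearIndependent_pair_of_one_lt_finrank (R := k) (M := E)
      (by omega) hx0
    let g : MvPolynomial σ k := ∑ i, C (x.1 i) * F i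
    let h : MvPolynomial σ k := ∑ i, C (y.1 i) * F i
    have hgh : ∀ u, pderiv u g * h = g * pderiv u h := by
      intro u
      rw [← sub_eq_zero]
      refine gn_zero_of_open hΔ fun p hp => ?_
      obtain ⟨α, β, hαβ, hmem⟩ := gn_pair (hEp ⟨p, hp⟩) (by rw [hE, hUdim]) x.2 y.2
      have t1 := gn_perp hF he hmem
      have t2 := gn_tangent hmem u
      have eg : eval p g = ∑ i, x.1 i * eval p (F i) := by simp [g]
      have eh : eval p h = ∑ i, y.1 i * eval p (F i) := by simp [h]
      have eg' : eval p (pderiv u g) = ∑ i, x.1 i * eval p (pderiv u (F i)) := by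
        simp [g, pderiv_C_mul]
      have eh' : eval p (pderiv u h) = ∑ i, y.1 i * eval p (pderiv u (F i)) := by
        simp [h, pderiv_C_mul]
      have s1 : α * eval p g + β * eval p h = 0 := by
        rw [eg, eh, ← t1, Finset.mul_sum, Finset.mul_sum, ← Finset.sum_add_distrib]
        refine Finset.sum_congr rfl fun i _ => ?_
        simp only [Pi.add_apply, Pi.smul_apply, smul_eq_mul, hFdef]
        ring
      have s2 : α * eval p (pderiv u g) + β * eval p (pderiv u h) = 0 := by
        rw [eg', eh', ← t2, Finset.mul_sum, Finset.mul_sum, ← Finset.sum_add_distrib]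
        refine Finset.sum_congr rfl fun i _ => ?_
        simp only [Pi.add_apply, Pi.smul_apply, smul_eq_mul]
        ring
      rw [map_sub, map_mul, map_mul]
      rcases hαβ with h0 | h0
      · apply mul_left_cancel₀ h0
        linear_combination eval p h * s2 - eval p (pderiv u h) * s1
      · apply mul_left_cancel₀ h0
        linear_combination eval p (pderiv u g) * s1 - eval p g * s2
    obtain ⟨α, β, hαβ, hz⟩ := gn_prop hgh
    refine ⟨α • x.1 + β • y.1, ?_, ?_⟩
    · intro h0
      rw [LinearIndependent.pair_iff] at hxy
      have := hxy α β (Subtype.ext h0)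
      tauto
    · rw [← hz]
      simp only [g, h, Finset.smul_sum, ← Finset.sum_add_distrib]
      refine Finset.sum_congr rfl fun i _ => ?_
      simp only [Pi.add_apply, Pi.smul_apply, smul_eq_mul, hFdef, smul_eq_C_mul, map_add, map_mul]
      ring

end GN

/-- If a squarefree homogeneous polynomial `f` in `n+1 ≥ 5` variables has vanishing
Hessian and the `k`-subalgebra generated by its partial derivatives has transcendence
degree at most `3` over `k` (i.e. any four of its elements are algebraically dependent;
geometrically `dim Z(f) ≤ 2`), then the partial derivatives of `f` are linearly
dependent over `k`, i.e. `V(f)` is a cone. -/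
theorem stmt4 {k : Type*} [Field k] [IsAlgClosed k] [CharZero k]
    (n d : ℕ) (hn : 4 ≤ n)
    (f : MvPolynomial (Fin (n + 1)) k)
    (hsf : Squarefree f) (hhom : f.IsHomogeneous d)
    (hhess : hessianDet f = 0)
    (htr : ∀ s : Fin 4 → MvPolynomial (Fin (n + 1)) k,
      (∀ i, s i ∈ Algebra.adjoin k (Set.range fun j => pderiv j f)) →
      ¬ AlgebraicIndependent k s) :
    ∃ c : Fin (n + 1) → k, c ≠ 0 ∧ ∑ i, c i • pderiv i f = 0 := by
  have hF : ∀ i, (pderiv i f).IsHomogeneous (d - 1) := fun i => hhom.pderiv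
  by_cases he : d - 1 = 0
  · have hC : ∀ i u, pderiv u (pderiv i f) = 0 := by
      intro i u
      have h := hF i
      rw [he, ← totalDegree_zero_iff_isHomogeneous, totalDegree_eq_zero_iff_eq_C] at h
      rw [h, pderiv_C]
    have h01 : (0 : Fin (n + 1)) ≠ Fin.last n := by
      intro h
      have := congrArg Fin.val h
      simp at this
      omega
    obtain ⟨a, b, hab, h⟩ := gn_prop (g := pderiv 0 f) (h := pderiv (Fin.last n) f)
      (fun u => by simp [hC])
    refine ⟨Pi.single 0 a + Pi.single (Fin.last n) b, ?_, ?_⟩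
    · intro h0
      have h1 := congrFun h0 0
      have h2 := congrFun h0 (Fin.last n)
      simp [Pi.single_apply, h01, h01.symm] at h1 h2
      tauto
    · rw [← h]
      simp [Pi.single_apply, add_smul, Finset.sum_add_distrib, ite_smul]
  · exact gn_main f he hF (by simpa using hn) htr
end

section
/- Let k be a field of characteristic zero and let h_0,…,h_n ∈ k[x_0,…,x_n] be polynomials satisfying Σ_{i=0}^n h_i·(∂h_j/∂x_i) = 0 for every j = 0,…,n. Then for any polynomial F ∈ k[x_0,…,x_n] the following are equivalent: (i) Σ_{i=0}^n h_i·(∂F/∂x_i) = 0; (ii) for every λ ∈ k, the polynomial obtained from F by substituting x_i ↦ x_i + λ·h_i(x_0,…,x_n) for each i equals F, i.e. F(x + λ·h(x)) = F(x) as an identity of polynomials. -/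
open MvPolynomial

/-- The Taylor-type expansion `F(x + T h)` as a polynomial in `T`. -/
noncomputable def gnPhi {k : Type*} [Field k] {n : ℕ}
    (h : Fin (n + 1) → MvPolynomial (Fin (n + 1)) k) :
    MvPolynomial (Fin (n + 1)) k →ₐ[k] Polynomial (MvPolynomial (Fin (n + 1)) k) :=
  aeval (fun i => Polynomial.C (X i) + Polynomial.C (h i) * Polynomial.X)

/-- The derivation `∑ h_i ∂_i`. -/
noncomputable def gnD {k : Type*} [Field k] {n : ℕ}
    (h : Fin (n + 1) → MvPolynomial (Fin (n + 1)) k) :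
    Derivation k (MvPolynomial (Fin (n + 1)) k) (MvPolynomial (Fin (n + 1)) k) :=
  mkDerivation k h

theorem gnD_eq {k : Type*} [Field k] {n : ℕ}
    (h : Fin (n + 1) → MvPolynomial (Fin (n + 1)) k) (F : MvPolynomial (Fin (n + 1)) k) :
    ∑ i, h i * pderiv i F = gnD h F := by
  induction F using MvPolynomial.induction_on with
  | C a => simp [gnD]
  | add p q hp hq => simp only [map_add, mul_add, Finset.sum_add_distrib, hp, hq]
  | mul_X p j hp =>
    have hX : gnD h (X j) = h j := mkDerivation_X _ _ _
    have h1 : ∑ i, h i * pderiv i (X j : MvPolynomial (Fin (n + 1)) k) = h j := by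
      simp [pderiv_X, Pi.single_apply]
    rw [Derivation.leibniz, hX, ← hp, smul_eq_mul, smul_eq_mul, Finset.mul_sum]
    rw [← h1]
    rw [Finset.mul_sum, ← Finset.sum_add_distrib]
    refine Finset.sum_congr rfl fun i _ => ?_
    rw [Derivation.leibniz, smul_eq_mul, smul_eq_mul]
    ring

theorem gnPhi_coeff {k : Type*} [Field k] {n : ℕ}
    (h : Fin (n + 1) → MvPolynomial (Fin (n + 1)) k) (hD : ∀ j, gnD h (h j) = 0)
    (F : MvPolynomial (Fin (n + 1)) k) :
    (gnPhi h F).coeff 0 = F ∧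
    ∀ m : ℕ, ((m : MvPolynomial (Fin (n + 1)) k) + 1) * (gnPhi h F).coeff (m + 1)
      = gnD h ((gnPhi h F).coeff m) := by
  have hX : ∀ j, gnD h (X j) = h j := fun j => mkDerivation_X _ _ _
  induction F using MvPolynomial.induction_on with
  | C a =>
    have hC : gnPhi h (C a) = Polynomial.C (C a) := by
      simp only [gnPhi, aeval_C]; rfl
    rw [hC]
    refine ⟨by simp, fun m => ?_⟩
    rcases m with _ | m
    · simp [Polynomial.coeff_C]
    · simp [Polynomial.coeff_C]
  | add p q hp hq =>
    refine ⟨by simp [hp.1, hq.1], fun m => ?_⟩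
    simp only [map_add, Polynomial.coeff_add, mul_add, hp.2, hq.2]
  | mul_X p j hp =>
    have hm : gnPhi h (p * X j) = gnPhi h p * Polynomial.C (X j)
        + gnPhi h p * Polynomial.C (h j) * Polynomial.X := by
      rw [map_mul]
      simp only [gnPhi, aeval_X]
      ring
    rw [hm]
    obtain ⟨h0, hp⟩ := hp
    refine ⟨by simp [h0], fun m => ?_⟩
    rcases m with _ | m
    · have := hp 0
      simp only [Polynomial.coeff_add, Polynomial.coeff_mul_C, Polynomial.coeff_mul_X,
        Polynomial.coeff_mul_X_zero, map_add, Derivation.leibniz, hX, hD, smul_eq_mul,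
        add_zero, ← this]
      push_cast
      ring
    · have h1 := hp m
      have h2 := hp (m + 1)
      simp only [Polynomial.coeff_add, Polynomial.coeff_mul_C, Polynomial.coeff_mul_X,
        map_add, Derivation.leibniz, hX, hD, smul_eq_mul, ← h1, ← h2]
      push_cast
      ring

theorem gnPhi_eval {k : Type*} [Field k] {n : ℕ}
    (h : Fin (n + 1) → MvPolynomial (Fin (n + 1)) k)
    (F : MvPolynomial (Fin (n + 1)) k) (lam : k) :
    aeval (fun i => X i + C lam * h i) F = (gnPhi h F).eval (C lam) := by
  induction F using MvPolynomial.induction_on with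
  | C a =>
    have hC : gnPhi h (C a) = Polynomial.C (C a) := by
      simp only [gnPhi, aeval_C]; rfl
    rw [hC]
    simp
  | add p q hp hq => rw [map_add, map_add, hp, hq, Polynomial.eval_add]
  | mul_X p j hp =>
    rw [map_mul, map_mul, hp, Polynomial.eval_mul]
    simp only [gnPhi, aeval_X, Polynomial.eval_add, Polynomial.eval_mul, Polynomial.eval_C,
      Polynomial.eval_X]
    ring

/-- The fundamental lemma of Gordan and Noether: if `h₀, …, hₙ` satisfy
`∑ i, hᵢ · ∂hⱼ/∂xᵢ = 0` for all `j`, then for any polynomial `F` one has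
`∑ i, hᵢ · ∂F/∂xᵢ = 0` iff `F(x + λ·h(x)) = F(x)` for every `λ ∈ k`. -/
theorem stmt5 {k : Type*} [Field k] [CharZero k] (n : ℕ)
    (h : Fin (n + 1) → MvPolynomial (Fin (n + 1)) k)
    (hrel : ∀ j, ∑ i, h i * pderiv i (h j) = 0)
    (F : MvPolynomial (Fin (n + 1)) k) :
    (∑ i, h i * pderiv i F = 0) ↔
      ∀ lam : k, aeval (fun i => X i + C lam * h i) F = F := by
  simp only [gnD_eq] at hrel ⊢
  obtain ⟨h0, hs⟩ := gnPhi_coeff h hrel F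
  simp only [gnPhi_eval]
  constructor
  · intro hF lam
    have hz : ∀ m, (gnPhi h F).coeff (m + 1) = 0 := by
      intro m
      have key : gnD h ((gnPhi h F).coeff m) = 0 := by
        induction m with
        | zero => rw [h0, hF]
        | succ m ih =>
          have := hs m
          rw [ih] at this
          rcases mul_eq_zero.1 this with h1 | h1
          · exact absurd h1 (Nat.cast_add_one_ne_zero m)
          · rw [h1, map_zero]
      have := hs m
      rw [key] at this
      exact (mul_eq_zero.1 this).resolve_left (Nat.cast_add_one_ne_zero m)
    have : gnPhi h F = Polynomial.C F := by
      ext1 m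
      rcases m with _ | m
      · simp [h0]
      · rw [hz, Polynomial.coeff_C_succ]
    rw [this, Polynomial.eval_C]
  · intro hF
    have : gnPhi h F = Polynomial.C F := by
      apply Polynomial.eq_of_infinite_eval_eq
      refine (Set.infinite_range_of_injective
        (MvPolynomial.C_injective (Fin (n + 1)) k)).mono ?_
      rintro _ ⟨lam, rfl⟩
      simp [hF lam]
    have h1 := hs 0
    rw [h0, this, Polynomial.coeff_C_succ, mul_zero] at h1
    exact h1.symm
end

section
/- Let k be a field of characteristic zero and let h_0,…,h_n ∈ k[x_0,…,x_n] satisfy Σ_{i=0}^n h_i·(∂h_j/∂x_i) = 0 for every j = 0,…,n. If F ∈ k[x_0,…,x_n] is a nonzero homogeneous polynomial of degree e ≥ 1 with Σ_{i=0}^n h_i·(∂F/∂x_i) = 0, then the composition F(h_0,…,h_n), obtained by substituting h_i for x_i in F, is the zero polynomial. -/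
open MvPolynomial

lemma stmt8_leib {k : Type*} [Field k] {σ : Type*}
    (D : Derivation k (MvPolynomial σ k) (MvPolynomial σ k))
    (a p : MvPolynomial σ k) (ha : D (D a) = 0) (m : ℕ) :
    D^[m + 1] (a * p) = a * D^[m + 1] p + (m + 1 : ℕ) * (D a * D^[m] p) := by
  induction m with
  | zero => simp [Derivation.leibniz, mul_comm]
  | succ m ih =>
    rw [Function.iterate_succ_apply', ih, map_add, D.leibniz, D.leibniz, D.leibniz, ha,
      D.map_natCast, Function.iterate_succ_apply' D (m + 1) p,
      Function.iterate_succ_apply' D m p]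
    simp only [smul_eq_mul]
    push_cast
    ring

lemma stmt8_key {k : Type*} [Field k] [CharZero k] {σ : Type*} [Fintype σ]
    (h : σ → MvPolynomial σ k)
    (D : Derivation k (MvPolynomial σ k) (MvPolynomial σ k))
    (hX : ∀ i, D (X i) = h i) (hh : ∀ i, D (h i) = 0) (e : ℕ) :
    ∀ G : MvPolynomial σ k, G.IsHomogeneous e →
      D^[e] G = (e.factorial : MvPolynomial σ k) * aeval h G := by
  have hker : ∀ G : MvPolynomial σ k, D (aeval h G) = 0 := by
    intro G
    induction G using MvPolynomial.induction_on with
    | C a => simp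
    | add p q hp hq => rw [map_add, map_add, hp, hq, add_zero]
    | mul_X p i hp => rw [map_mul, D.leibniz, hp, aeval_X, hh]; simp
  induction e with
  | zero =>
    intro G hG
    rw [← mem_homogeneousSubmodule, homogeneousSubmodule_zero] at hG
    obtain ⟨c, rfl⟩ := Submodule.mem_one.1 hG
    simp
  | succ e ih =>
    intro G hG
    have hE := hG.sum_X_mul_pderiv
    have h1 : ∀ i, D^[e + 1] (X i * pderiv i G) =
        ((e + 1 : ℕ) * (e.factorial : MvPolynomial σ k)) * (h i * aeval h (pderiv i G)) := by
      intro i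
      have hd := ih (pderiv i G) hG.pderiv
      rw [stmt8_leib D _ _ (by rw [hX, hh]), Function.iterate_succ_apply', hd, D.leibniz, hker,
        D.map_natCast, hX]
      simp only [smul_zero, add_zero, mul_zero, zero_add]
      ring
    have hlin : ∀ p, D^[e + 1] p = ((D : MvPolynomial σ k →ₗ[k] MvPolynomial σ k) ^ (e + 1)) p := by
      intro p
      rw [Module.End.pow_apply]
      rfl
    have h2 := congrArg (fun p => D^[e + 1] p) hE
    have h3 := congrArg (aeval h) hE
    simp only [map_sum, map_mul, aeval_X, map_nsmul] at h3
    simp only [hlin, map_sum, map_nsmul] at h2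
    simp only [← hlin, h1] at h2
    rw [← Finset.mul_sum, h3] at h2
    have hne : ((e + 1 : ℕ) : MvPolynomial σ k) ≠ 0 := Nat.cast_ne_zero.2 e.succ_ne_zero
    apply mul_left_cancel₀ hne
    rw [nsmul_eq_mul, nsmul_eq_mul] at h2
    rw [← h2, Nat.factorial_succ]
    push_cast
    ring

/-- If `h₀, …, hₙ` satisfy `∑ i, hᵢ · ∂hⱼ/∂xᵢ = 0` for all `j`, and `F` is a nonzero
homogeneous polynomial of degree `e ≥ 1` with `∑ i, hᵢ · ∂F/∂xᵢ = 0`, then the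
composition `F(h₀, …, hₙ)` is the zero polynomial. -/
theorem stmt8 {k : Type*} [Field k] [CharZero k] (n : ℕ)
    (h : Fin (n + 1) → MvPolynomial (Fin (n + 1)) k)
    (hrel : ∀ j, ∑ i, h i * pderiv i (h j) = 0)
    (F : MvPolynomial (Fin (n + 1)) k) (e : ℕ) (he : 1 ≤ e)
    (hF0 : F ≠ 0) (hFhom : F.IsHomogeneous e)
    (hFrel : ∑ i, h i * pderiv i F = 0) :
    aeval h F = 0 := by
  have hD : ∀ p, (∑ i, h i • pderiv (R := k) i) p = ∑ i, h i * pderiv i p := by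
    intro p
    rw [← Derivation.coeFnAddMonoidHom_apply, map_sum, Finset.sum_apply]
    rfl
  have key := stmt8_key h (∑ i, h i • pderiv i)
    (by intro i; rw [hD]; simp [pderiv_X, Pi.single_apply])
    (by intro i; rw [hD, hrel]) e F hFhom
  obtain ⟨m, rfl⟩ := Nat.exists_eq_add_of_le' he
  rw [Function.iterate_succ_apply, hD, hFrel, Function.iterate_fixed (map_zero _)] at key
  exact (mul_eq_zero.1 key.symm).resolve_left (Nat.cast_ne_zero.2 (Nat.factorial_ne_zero _))
end

section
/- Let k be a field of characteristic zero and let h_0,…,h_n ∈ k[x_0,…,x_n] be homogeneous polynomials, each of degree ≥ 1, satisfying Σ_{i=0}^n h_i·(∂h_j/∂x_i) = 0 for every j = 0,…,n. Then for every j the composition h_j(h_0,…,h_n), obtained by substituting h_i for x_i in h_j, is the zero polynomial; in other words, the image of the rational map ψ = (h_0 : … : h_n) is contained in its base locus V(h_0,…,h_n). -/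
open MvPolynomial

lemma aux_deriv {k : Type*} [Field k] {N : ℕ} {R : Type*} [CommRing R] [Algebra k R]
    (g : Fin N → Polynomial R) (p : MvPolynomial (Fin N) k) :
    Polynomial.derivative (aeval g p)
      = ∑ i, Polynomial.derivative (g i) * aeval g (pderiv i p) := by
  induction p using MvPolynomial.induction_on with
  | C a =>
    simp [Polynomial.algebraMap_apply]
  | add p q hp hq => simp [hp, hq, mul_add, Finset.sum_add_distrib]
  | mul_X p i hp =>
    simp only [map_mul, aeval_X, Polynomial.derivative_mul, hp, Derivation.leibniz, pderiv_X,
      map_add, smul_eq_mul, mul_add, Finset.sum_add_distrib, Finset.sum_mul]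
    rw [add_comm]
    congr 1
    · rw [Finset.sum_eq_single i]
      · simp; ring
      · intro b _ hb
        simp [Pi.single_apply, hb.symm]
      · simp
    · exact Finset.sum_congr rfl fun _ _ => by ring

lemma aux_mon {N : ℕ} {R : Type*} [CommRing R] (a b : Fin N → R) (d : Fin N →₀ ℕ) :
    (d.prod fun i m => (Polynomial.C (a i) + Polynomial.X * Polynomial.C (b i)) ^ m).natDegree
        ≤ d.degree ∧
    (d.prod fun i m => (Polynomial.C (a i) + Polynomial.X * Polynomial.C (b i)) ^ m).coeff
        d.degree = d.prod fun i m => b i ^ m := by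
  have h1 : ∀ i, (Polynomial.C (a i) + Polynomial.X * Polynomial.C (b i)).natDegree ≤ 1 := by
    intro i
    compute_degree
  induction d using Finsupp.induction_linear with
  | zero => simp
  | add f g hf hg =>
    rw [Finsupp.prod_add_index' (by simp) (by intros; rw [pow_add]),
      Finsupp.prod_add_index' (by simp) (by intros; rw [pow_add]), map_add]
    refine ⟨Polynomial.natDegree_mul_le_of_le hf.1 hg.1, ?_⟩
    rw [Polynomial.coeff_mul_add_eq_of_natDegree_le hf.1 hg.1, hf.2, hg.2]
  | single i m =>
    rw [Finsupp.prod_single_index (by simp), Finsupp.prod_single_index (by simp),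
      Finsupp.degree_single]
    refine ⟨?_, ?_⟩
    · simpa using Polynomial.natDegree_pow_le_of_le m (h1 i)
    · have := Polynomial.coeff_pow_of_natDegree_le (m := m) (h1 i)
      simp only [mul_one, one_mul] at this
      rw [this]
      simp [Polynomial.coeff_C]

lemma aux_coeff {k : Type*} [Field k] {N : ℕ} {R : Type*} [CommRing R] [Algebra k R]
    (a b : Fin N → R) (p : MvPolynomial (Fin N) k) (e : ℕ) (hp : p.IsHomogeneous e) :
    (aeval (fun i => Polynomial.C (a i) + Polynomial.X * Polynomial.C (b i)) p).coeff e
      = aeval b p := by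
  rw [aeval_def, aeval_def, eval₂_eq', eval₂_eq', Polynomial.finset_sum_coeff]
  refine Finset.sum_congr rfl fun d hd => ?_
  have hd' : d.degree = e := by
    rw [Finsupp.degree_eq_weight_one]; exact hp (mem_support_iff.mp hd)
  have := (aux_mon a b d).2
  rw [Finsupp.prod_fintype _ _ (by simp), Finsupp.prod_fintype _ _ (by simp), hd'] at this
  rw [Polynomial.algebraMap_apply, Polynomial.coeff_C_mul, this]

/-- If `h₀, …, hₙ` are homogeneous polynomials of degrees `≥ 1` satisfying
`∑ i, hᵢ · ∂hⱼ/∂xᵢ = 0` for all `j`, then `hⱼ(h₀, …, hₙ) = 0` for every `j`: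
the image of the rational map `ψ = (h₀ : … : hₙ)` is contained in its base locus. -/
theorem stmt9 {k : Type*} [Field k] [CharZero k] (n : ℕ)
    (h : Fin (n + 1) → MvPolynomial (Fin (n + 1)) k)
    (e : Fin (n + 1) → ℕ) (he : ∀ j, 1 ≤ e j)
    (hhom : ∀ j, (h j).IsHomogeneous (e j))
    (hrel : ∀ j, ∑ i, h i * pderiv i (h j) = 0) :
    ∀ j, aeval h (h j) = 0 := by
  set g : Fin (n + 1) → Polynomial (MvPolynomial (Fin (n + 1)) k) :=
    fun i => Polynomial.C (X i) + Polynomial.X * Polynomial.C (h i) with hg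
  have hder : ∀ j, Polynomial.derivative (aeval g (h j) - Polynomial.C (h j))
      = -∑ i, (aeval g (h i) - Polynomial.C (h i)) * aeval g (pderiv i (h j)) := by
    intro j
    have h0 := congrArg (aeval g) (hrel j)
    simp only [map_sum, map_mul, map_zero] at h0
    rw [map_sub, aux_deriv]
    simp only [sub_mul, Finset.sum_sub_distrib, h0]
    simp [hg]
  have hzero : ∀ j, (aeval g (h j) - Polynomial.C (h j)).coeff 0 = 0 := by
    intro j
    have : ((Polynomial.aeval (R := MvPolynomial (Fin (n+1)) k) (0 : MvPolynomial (Fin (n+1)) k)).restrictScalars k).comp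
        (aeval g) = AlgHom.id k _ := by
      ext i
      simp [hg]
    have h2 := congrArg (fun φ => φ (h j)) this
    simp only [AlgHom.comp_apply, AlgHom.restrictScalars_apply, AlgHom.id_apply] at h2
    rw [Polynomial.coe_aeval_eq_eval, ← Polynomial.coeff_zero_eq_eval_zero] at h2
    simp [h2]
  have hdvd : ∀ m j, Polynomial.X ^ m ∣ (aeval g (h j) - Polynomial.C (h j)) := by
    intro m
    induction m with
    | zero => simp
    | succ m ih =>
      intro j
      have hd : Polynomial.X ^ m ∣ Polynomial.derivative (aeval g (h j) - Polynomial.C (h j)) := by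
        rw [hder]
        have hs : Polynomial.X ^ m ∣
            ∑ i, (aeval g (h i) - Polynomial.C (h i)) * aeval g (pderiv i (h j)) :=
          Finset.dvd_sum fun i _ => (ih i).mul_right _
        obtain ⟨q, hq⟩ := hs
        exact ⟨-q, by rw [hq]; ring⟩
      rw [Polynomial.X_pow_dvd_iff] at hd ⊢
      intro d hdm
      cases d with
      | zero => exact hzero j
      | succ d =>
        have := hd d (by omega)
        rw [Polynomial.coeff_derivative] at this
        exact (mul_eq_zero.mp this).resolve_right (by exact_mod_cast Nat.succ_ne_zero d)
  intro j
  rw [← aux_coeff X h (h j) (e j) (hhom j)]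
  have h3 := (Polynomial.X_pow_dvd_iff.mp (hdvd (e j + 1) j)) (e j) (by omega)
  rw [Polynomial.coeff_sub, Polynomial.coeff_C_ne_zero (by have := he j; omega), sub_zero] at h3
  exact h3
end

section
/- Let k be a field of characteristic zero and let h_0,…,h_n ∈ k[x_0,…,x_n] satisfy Σ_{i=0}^n h_i·(∂h_j/∂x_i) = 0 for every j = 0,…,n. Then for every j = 0,…,n and every λ ∈ k, the polynomial obtained from h_j by substituting x_i ↦ x_i + λ·h_i(x_0,…,x_n) equals h_j; that is, h_j(x + λ·h(x)) = h_j(x) as polynomial identities. In particular, for every point p ∈ k^{n+1} and every λ ∈ k one has h_j(p + λ·(h_0(p),…,h_n(p))) = h_j(p), so each fiber of the map h = (h_0,…,h_n) over a point q is a cone through q. -/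
open MvPolynomial

theorem aux_coeff_s10 {k : Type*} [Field k] (n : ℕ)
    (h : Fin (n + 1) → MvPolynomial (Fin (n + 1)) k)
    (D : Derivation k (MvPolynomial (Fin (n + 1)) k) (MvPolynomial (Fin (n + 1)) k))
    (hX : ∀ i, D (X i) = h i) (hD : ∀ i, D (h i) = 0)
    (f : MvPolynomial (Fin (n + 1)) k) (m : ℕ) :
    (aeval (fun i => Polynomial.C (X i) + Polynomial.X * Polynomial.C (h i)) f :
      Polynomial (MvPolynomial (Fin (n + 1)) k)).coeff (m + 1) * ((m : MvPolynomial (Fin (n + 1)) k) + 1)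
    = D ((aeval (fun i => Polynomial.C (X i) + Polynomial.X * Polynomial.C (h i)) f :
      Polynomial (MvPolynomial (Fin (n + 1)) k)).coeff m) := by
  induction f using MvPolynomial.induction_on generalizing m with
  | C a =>
    rw [← MvPolynomial.algebraMap_eq, AlgHom.commutes,
      IsScalarTower.algebraMap_apply k (MvPolynomial (Fin (n + 1)) k),
      Polynomial.algebraMap_apply]
    simp only [Algebra.algebraMap_self, RingHom.id_apply, Polynomial.coeff_C]
    split_ifs <;> simp_all
  | add p q hp hq => simp only [map_add, Polynomial.coeff_add, add_mul, hp, hq]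
  | mul_X p i hp =>
    rw [map_mul, aeval_X]
    set F : Polynomial (MvPolynomial (Fin (n + 1)) k) := aeval _ p
    cases m with
    | zero =>
      have h0 := hp 0
      simp only [mul_add, ← mul_assoc, Polynomial.coeff_add, Polynomial.coeff_mul_C,
        Polynomial.coeff_mul_X, Polynomial.coeff_mul_X_zero, map_add, Derivation.leibniz, hX, hD,
        smul_eq_mul]
      simp only [← h0]
      simp
      ring
    | succ m =>
      have h0 := hp m
      have h1 := hp (m + 1)
      simp only [mul_add, ← mul_assoc, Polynomial.coeff_add, Polynomial.coeff_mul_C,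
        Polynomial.coeff_mul_X, map_add, Derivation.leibniz, hX, hD, smul_eq_mul]
      rw [← h0, ← h1]
      push_cast
      ring

/-- If `h₀, …, hₙ` satisfy `∑ i, hᵢ · ∂hⱼ/∂xᵢ = 0` for all `j`, then
`hⱼ(x + λ·h(x)) = hⱼ(x)` as polynomial identities, and in particular
`hⱼ(p + λ·h(p)) = hⱼ(p)` for every point `p ∈ k^{n+1}`: each fiber of the map
`h = (h₀, …, hₙ)` over a point `q` is a cone through `q`. -/
theorem stmt10 {k : Type*} [Field k] [CharZero k] (n : ℕ)
    (h : Fin (n + 1) → MvPolynomial (Fin (n + 1)) k)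
    (hrel : ∀ j, ∑ i, h i * pderiv i (h j) = 0) :
    ∀ (j : Fin (n + 1)) (lam : k),
      aeval (fun i => X i + C lam * h i) (h j) = h j ∧
      ∀ p : Fin (n + 1) → k,
        eval (fun i => p i + lam * eval p (h i)) (h j) = eval p (h j) := by
  intro j lam
  have key : aeval (fun i => X i + C lam * h i) (h j) = h j := by
    let D : Derivation k (MvPolynomial (Fin (n + 1)) k) (MvPolynomial (Fin (n + 1)) k) :=
      mkDerivation k h
    have hX : ∀ i, D (X i) = h i := fun i => mkDerivation_X k h i
    have hDeq : ∀ f, D f = ∑ i, h i * pderiv i f := by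
      intro f
      induction f using MvPolynomial.induction_on with
      | C a => rw [derivation_C]; simp
      | add p q hp hq => simp only [map_add, hp, hq, mul_add, Finset.sum_add_distrib]
      | mul_X p i hp =>
        rw [Derivation.leibniz, hX, hp]
        simp only [Derivation.leibniz, smul_eq_mul, mul_add, Finset.sum_add_distrib, pderiv_X]
        congr 1
        · simp [Pi.single_apply, mul_comm]
        · rw [Finset.mul_sum]
          exact Finset.sum_congr rfl fun _ _ => by ring
    have hD : ∀ i, D (h i) = 0 := fun i => by rw [hDeq, hrel]
    have H := aux_coeff_s10 n h D hX hD (h j)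
    -- specialization maps
    have hsp : ∀ c : MvPolynomial (Fin (n + 1)) k, ∀ f : MvPolynomial (Fin (n + 1)) k,
        Polynomial.eval c (aeval (fun i => Polynomial.C (X i) + Polynomial.X * Polynomial.C (h i)) f :
          Polynomial (MvPolynomial (Fin (n + 1)) k)) = aeval (fun i => X i + c * h i) f := by
      intro c f
      induction f using MvPolynomial.induction_on with
      | C a =>
        rw [← MvPolynomial.algebraMap_eq, AlgHom.commutes, AlgHom.commutes,
          IsScalarTower.algebraMap_apply k (MvPolynomial (Fin (n + 1)) k),
          Polynomial.algebraMap_apply]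
        simp
      | add p q hp hq => simp only [map_add, Polynomial.eval_add, hp, hq]
      | mul_X p i hp =>
        rw [map_mul, map_mul, Polynomial.eval_mul, hp, aeval_X, aeval_X]
        simp only [Polynomial.eval_add, Polynomial.eval_mul, Polynomial.eval_C, Polynomial.eval_X]
    set F : Polynomial (MvPolynomial (Fin (n + 1)) k) :=
      aeval (fun i => Polynomial.C (X i) + Polynomial.X * Polynomial.C (h i)) (h j) with hF
    have h0 : F.coeff 0 = h j := by
      rw [Polynomial.coeff_zero_eq_eval_zero, hF, hsp]
      simp
    have hz : ∀ m, F.coeff (m + 1) = 0 := by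
      intro m
      have hm : ((m : MvPolynomial (Fin (n + 1)) k) + 1) ≠ 0 := Nat.cast_add_one_ne_zero m
      have := H m
      have hr : D (F.coeff m) = 0 := by
        induction m with
        | zero => rw [h0, hD]
        | succ m ih =>
          have hm' : ((m : MvPolynomial (Fin (n + 1)) k) + 1) ≠ 0 := Nat.cast_add_one_ne_zero m
          have h2 := H m
          rw [ih hm' h2] at h2
          rw [(mul_eq_zero.mp h2).resolve_right hm', map_zero]
      rw [hr] at this
      exact (mul_eq_zero.mp this).resolve_right hm
    have hFC : F = Polynomial.C (h j) := by
      ext1 m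
      cases m with
      | zero => rw [h0, Polynomial.coeff_C_zero]
      | succ m => rw [hz, Polynomial.coeff_C_succ]
    rw [← hsp, ← hF, hFC, Polynomial.eval_C]
  refine ⟨key, fun p => ?_⟩
  have := congrArg (eval p) key
  rw [← this, ← MvPolynomial.coe_aeval_eq_eval, ← MvPolynomial.coe_aeval_eq_eval]
  simp only [RingHom.coe_coe]
  rw [← AlgHom.comp_apply, MvPolynomial.comp_aeval]
  simp [MvPolynomial.aeval_eq_eval]
end

section
/- Let k be a field of characteristic zero, let f ∈ k[x_0,…,x_n] be a homogeneous polynomial, and let g ∈ k[y_0,…,y_n] satisfy g(f_0,…,f_n) = 0 in k[x_0,…,x_n], where f_i = ∂f/∂x_i. Define g_i := (∂g/∂y_i)(f_0,…,f_n) ∈ k[x_0,…,x_n]. Then for every j = 0,…,n and every λ ∈ k, the polynomial obtained from f_j by substituting x_i ↦ x_i + λ·g_i(x_0,…,x_n) equals f_j; that is, f_j(x + λ·(g_0(x),…,g_n(x))) = f_j(x) as polynomial identities. -/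
open MvPolynomial

/-- Chain rule for a derivation applied to a polynomial expression. -/
theorem deriv_aeval_chain {k : Type*} [Field k] {n : ℕ}
    (D : Derivation k (MvPolynomial (Fin n) k) (MvPolynomial (Fin n) k))
    (h : Fin n → MvPolynomial (Fin n) k) (g : MvPolynomial (Fin n) k) :
    D (aeval h g) = ∑ i, aeval h (pderiv i g) * D (h i) := by
  induction g using MvPolynomial.induction_on with
  | C a => simp
  | add p q hp hq => simp only [map_add, hp, hq, add_mul, Finset.sum_add_distrib]
  | mul_X p j hp =>
    simp only [map_mul, aeval_X, Derivation.leibniz, hp, smul_eq_mul, map_add, pderiv_X,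
      add_mul, Finset.sum_add_distrib, Finset.mul_sum]
    congr 1
    · rw [Finset.sum_eq_single j]
      · simp
      · intro b _ hb
        simp [Pi.single_apply, hb]
      · simp
    · exact Finset.sum_congr rfl fun i _ => by ring

/-- If `D vᵢ = 0`, `D xᵢ = vᵢ` and `D p = 0`, then `p` is constant in the direction `v`. -/
theorem translate_eq {k : Type*} [Field k] [CharZero k] {n : ℕ}
    (D : Derivation k (MvPolynomial (Fin n) k) (MvPolynomial (Fin n) k))
    (v : Fin n → MvPolynomial (Fin n) k) (hX : ∀ i, D (X i) = v i) (hv : ∀ i, D (v i) = 0)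
    (p : MvPolynomial (Fin n) k) (hp : D p = 0) (lam : k) :
    aeval (fun i => X i + C lam * v i) p = p := by
  letI : Differential (MvPolynomial (Fin n) k) := ⟨D.restrictScalars ℤ⟩
  have hD : ∀ q : MvPolynomial (Fin n) k, Differential.deriv q = D q := fun _ => rfl
  let w : Fin n → Polynomial (MvPolynomial (Fin n) k) :=
    fun i => Polynomial.C (X i) + Polynomial.X * Polynomial.C (v i)
  have key : ∀ q : MvPolynomial (Fin n) k,
      Differential.mapCoeffs (aeval w q) = Polynomial.derivative (aeval w q) := by
    intro q
    induction q using MvPolynomial.induction_on with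
    | C a =>
      have : (aeval w (C a) : Polynomial (MvPolynomial (Fin n) k)) = Polynomial.C (C a) := by
        rw [aeval_C]; rfl
      rw [this, Differential.mapCoeffs_C, hD]
      simp
    | add p q hp hq => simp only [map_add, hp, hq]
    | mul_X p j hp =>
      have : Differential.mapCoeffs (w j) = Polynomial.derivative (w j) := by
        simp [w, hD, hX, hv]
      rw [map_mul, aeval_X, Derivation.leibniz, hp, this, Polynomial.derivative_mul]
      simp only [smul_eq_mul]
      ring
  have h0 : ∀ q : MvPolynomial (Fin n) k, ∀ c : MvPolynomial (Fin n) k,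
      Polynomial.eval c (aeval w q) = aeval (fun i => X i + c * v i) q := by
    intro q c
    induction q using MvPolynomial.induction_on with
    | C a =>
      have : (aeval w (C a) : Polynomial (MvPolynomial (Fin n) k)) = Polynomial.C (C a) := by
        rw [aeval_C]; rfl
      rw [this]
      simp
    | add p q hp hq => simp [hp, hq]
    | mul_X p j hp =>
      have : Polynomial.eval c (w j) = X j + c * v j := by
        simp only [w, Polynomial.eval_add, Polynomial.eval_mul, Polynomial.eval_C,
          Polynomial.eval_X]
      rw [map_mul, map_mul, aeval_X, aeval_X, Polynomial.eval_mul, hp, this]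
  have hc0 : (aeval w p).coeff 0 = p := by
    rw [Polynomial.coeff_zero_eq_eval_zero, h0]
    simp
  have hstep : ∀ m, D ((aeval w p).coeff m) = (aeval w p).coeff (m + 1) * ((m : _) + 1) := by
    intro m
    rw [← Polynomial.coeff_derivative, ← key, Differential.coeff_mapCoeffs, hD]
  have hc : ∀ m, (aeval w p).coeff (m + 1) = 0 := by
    intro m
    have hm : D ((aeval w p).coeff m) = 0 := by
      induction m with
      | zero => rw [hc0, hp]
      | succ m ih =>
        have := hstep m
        rw [ih] at this
        rcases mul_eq_zero.1 this.symm with h | h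
        · rw [h, map_zero]
        · exact absurd h (by exact_mod_cast m.succ_ne_zero)
    rw [hstep m] at hm
    rcases mul_eq_zero.1 hm with h | h
    · exact h
    · exact absurd h (by exact_mod_cast m.succ_ne_zero)
  have hfin : aeval w p = Polynomial.C p := by
    ext1 m
    cases m with
    | zero => rw [hc0, Polynomial.coeff_C_zero]
    | succ m => rw [hc, Polynomial.coeff_C_succ]
  rw [← h0, hfin, Polynomial.eval_C]

/-- Partial derivatives commute. -/
theorem pderiv_comm' {k : Type*} [Field k] {n : ℕ} (i j : Fin n) (f : MvPolynomial (Fin n) k) :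
    pderiv i (pderiv j f) = pderiv j (pderiv i f) := by
  have : ⁅(pderiv i : Derivation k (MvPolynomial (Fin n) k) (MvPolynomial (Fin n) k)),
      (pderiv j : Derivation k (MvPolynomial (Fin n) k) (MvPolynomial (Fin n) k))⁆ = 0 := by
    apply derivation_ext
    intro l
    simp [Derivation.commutator_apply, pderiv_X, Pi.single_apply, apply_ite]
  have h2 := congrArg (fun d => d f) this
  simpa [Derivation.commutator_apply, sub_eq_zero] using h2


/-- Identity (2.5) of the paper: if `f` is homogeneous, `g(f₀, …, fₙ) = 0` where
`fᵢ = ∂f/∂xᵢ`, and `gᵢ := (∂g/∂yᵢ)(f₀, …, fₙ)`, then for every `j` and every `λ ∈ k`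
one has `fⱼ(x + λ·(g₀(x), …, gₙ(x))) = fⱼ(x)` as polynomial identities. -/
theorem stmt11 {k : Type*} [Field k] [CharZero k] (n d : ℕ)
    (f : MvPolynomial (Fin (n + 1)) k) (hhom : f.IsHomogeneous d)
    (g : MvPolynomial (Fin (n + 1)) k)
    (hg : aeval (fun i => pderiv i f) g = 0) :
    ∀ (j : Fin (n + 1)) (lam : k),
      aeval (fun i => X i + C lam * (aeval (fun i' => pderiv i' f) (pderiv i g)))
        (pderiv j f) = pderiv j f := by
  intro j lam
  let v : Fin (n + 1) → MvPolynomial (Fin (n + 1)) k :=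
    fun i => aeval (fun i' => pderiv i' f) (pderiv i g)
  let D := mkDerivation k v
  have hX : ∀ i, D (X i) = v i := fun i => mkDerivation_X k v i
  have hDf : ∀ j, D (pderiv j f) = 0 := by
    intro j
    have h1 := deriv_aeval_chain D X (pderiv j f)
    have h2 := deriv_aeval_chain (pderiv j) (fun i => pderiv i f) g
    rw [hg, map_zero] at h2
    simp only [aeval_X_left, AlgHom.id_apply] at h1
    rw [h1, h2]
    refine Finset.sum_congr rfl fun i _ => ?_
    rw [hX, pderiv_comm' i j, mul_comm]
  have hDv : ∀ i, D (v i) = 0 := by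
    intro i
    have := deriv_aeval_chain D (fun i' => pderiv i' f) (pderiv i g)
    simp only [hDf, mul_zero, Finset.sum_const_zero] at this
    exact this
  exact translate_eq D v hX hDv _ (hDf j) lam
end

section
/- Let k be a field of characteristic zero and let f ∈ k[x_0,…,x_n] be a homogeneous polynomial. Then the Hessian polynomial h_f of f is identically zero if and only if the partial derivatives f_0 = ∂f/∂x_0, …, f_n = ∂f/∂x_n are algebraically dependent over k, i.e. if and only if the family (f_0,…,f_n) is not algebraically independent over k. -/
open MvPolynomial

lemma aux_chain {k R : Type*} [Field k] [CommRing R] [Algebra k R] {m : ℕ}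
    (D : Derivation k R R) (g : Fin m → R) (P : MvPolynomial (Fin m) k) :
    D (aeval g P) = ∑ j, aeval g (pderiv j P) * D (g j) := by
  classical
  induction P using MvPolynomial.induction_on with
  | C a => simp
  | add p q hp hq => simp [hp, hq, add_mul, Finset.sum_add_distrib]
  | mul_X p i h =>
    simp only [map_mul, aeval_X, Derivation.leibniz, h, smul_eq_mul, map_add, pderiv_X, add_mul,
      Finset.sum_add_distrib, Finset.mul_sum]
    congr 1
    · rw [Finset.sum_eq_single i]
      · simp
      · intro b _ hb
        simp [Pi.single_apply, hb.symm]
      · simp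
    · exact Finset.sum_congr rfl fun j _ => by ring

lemma aux_const {k : Type*} [Field k] [CharZero k] {m : ℕ}
    (P : MvPolynomial (Fin m) k) (h : ∀ j, pderiv j P = 0) : P = C (coeff 0 P) := by
  classical
  ext s
  rw [coeff_C]
  split_ifs with hs
  · rw [hs]
  · obtain ⟨i, hi⟩ : ∃ i, s i ≠ 0 := by
      by_contra! hc
      exact hs (Finsupp.ext fun i => by simp [hc i])
    have h1 := coeff_pderiv (i := i) P (s - Finsupp.single i 1)
    rw [h i, Finsupp.sub_add_single_one_cancel hi, coeff_zero] at h1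
    rcases mul_eq_zero.mp h1.symm with h2 | h2
    · exact h2
    · exact absurd h2 (Nat.cast_add_one_ne_zero _)

lemma aux_deg {k : Type*} [Field k] {m N : ℕ}
    (P : MvPolynomial (Fin m) k) (h : P.totalDegree ≤ N + 1) (j : Fin m) :
    (pderiv j P).totalDegree ≤ N := by
  refine Finset.sup_le ?_
  intro s hs
  have h1 : s + Finsupp.single j 1 ∈ P.support := by
    rw [mem_support_iff, coeff_pderiv] at hs
    exact mem_support_iff.mpr (left_ne_zero_of_mul hs)
  have h2 := le_totalDegree h1
  rw [Finsupp.sum_add_index' (by simp) (by simp)] at h2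
  simp at h2
  simp at h2 ⊢
  omega

lemma aux_indep {k : Type*} [Field k] [CharZero k] {m : ℕ}
    (g : Fin m → MvPolynomial (Fin m) k)
    (hd : (Matrix.of fun i j => pderiv i (g j)).det ≠ 0) : AlgebraicIndependent k g := by
  have key : ∀ N : ℕ, ∀ P : MvPolynomial (Fin m) k, P.totalDegree ≤ N → aeval g P = 0 → P = 0 := by
    have const : ∀ P : MvPolynomial (Fin m) k, P = C (coeff 0 P) → aeval g P = 0 → P = 0 := by
      intro P hP h0
      rw [hP] at h0
      rw [aeval_C, algebraMap_eq, C_eq_zero] at h0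
      rw [hP, h0, C_0]
    intro N
    induction N with
    | zero =>
      intro P hP
      exact const P (totalDegree_eq_zero_iff_eq_C.mp (Nat.le_zero.mp hP))
    | succ N ih =>
      intro P hP h0
      refine const P (aux_const P fun j => ?_) h0
      apply ih _ (aux_deg P hP j)
      have hv := Matrix.eq_zero_of_mulVec_eq_zero hd
        (v := fun j => aeval g (pderiv j P)) (by
          funext i
          have := aux_chain (pderiv i) g P
          rw [h0, map_zero] at this
          simp only [Matrix.mulVec, dotProduct, Matrix.of_apply, Pi.zero_apply]
          rw [this]
          exact Finset.sum_congr rfl fun j _ => mul_comm _ _)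
      exact congrFun hv j
  rw [algebraicIndependent_iff]
  exact fun P hP => key _ P le_rfl hP

lemma aux_alg {A R : Type*} [CommRing A] [CommRing R] [IsDomain R] [CharZero R]
    [Algebra A R] [FaithfulSMul A R] (D : Derivation A R R) (x : R) (hx : IsAlgebraic A x) :
    D x = 0 := by
  have : IsDomain A := (FaithfulSMul.algebraMap_injective A R).isDomain
  have : CharZero A := by
    refine ⟨fun a b h => ?_⟩
    have := congrArg (algebraMap A R) h
    simpa using this
  have key : ∀ N : ℕ, ∀ p : Polynomial A, p.natDegree ≤ N → p ≠ 0 → Polynomial.aeval x p = 0 →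
      D x = 0 := by
    intro N
    induction N with
    | zero =>
      intro p hp hp0 h
      rw [Polynomial.eq_C_of_natDegree_le_zero hp] at h hp0
      simp at h
      simp [h] at hp0
    | succ N ih =>
      intro p hp hp0 h
      have h1 := D.map_aeval p x
      rw [h, map_zero, smul_eq_mul, eq_comm, mul_eq_zero] at h1
      rcases h1 with h1 | h1
      · by_cases hz : p.natDegree = 0
        · exact ih p (by omega) hp0 h
        · refine ih (Polynomial.derivative p) ?_ ?_ h1
          · have := Polynomial.natDegree_derivative_le p
            omega
          · intro h2
            exact hz (Polynomial.natDegree_eq_zero_of_derivative_eq_zero h2)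
      · exact h1
  obtain ⟨p, hp0, hp⟩ := hx
  exact key _ p le_rfl hp0 hp

lemma aux_det {k : Type*} [Field k] [CharZero k] {m : ℕ}
    (g : Fin m → MvPolynomial (Fin m) k) (hg : AlgebraicIndependent k g) :
    (Matrix.of fun i j => pderiv i (g j)).det ≠ 0 := by
  intro hd
  obtain ⟨w, hw0, hw⟩ := Matrix.exists_vecMul_eq_zero_iff.mpr hd
  have htb : IsTranscendenceBasis k g :=
    hg.isTranscendenceBasis_of_lift_trdeg_le_of_finite (by
      rw [MvPolynomial.trdeg_of_isDomain]; simp)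
  have halg := htb.isAlgebraic
  let D : Derivation k (MvPolynomial (Fin m) k) (MvPolynomial (Fin m) k) := ∑ l, w l • pderiv l
  have hD : ∀ p, D p = ∑ l, w l * pderiv l p := by
    intro p
    simp only [D, ← Derivation.coeFnAddMonoidHom_apply, map_sum, Finset.sum_apply]
    rfl
  have hDg : ∀ j, D (g j) = 0 := by
    intro j
    have := congrFun hw j
    simpa [Matrix.vecMul, dotProduct, hD] using this
  have hDA : ∀ a ∈ Algebra.adjoin k (Set.range g), D a = 0 := by
    intro a ha
    have : Set.EqOn D (0 : Derivation k (MvPolynomial (Fin m) k) (MvPolynomial (Fin m) k))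
        (Algebra.adjoin k (Set.range g)) :=
      Derivation.eqOn_adjoin (by rintro _ ⟨j, rfl⟩; exact hDg j)
    exact this ha
  let D' : Derivation (Algebra.adjoin k (Set.range g)) (MvPolynomial (Fin m) k)
      (MvPolynomial (Fin m) k) := 
    { toFun := D
      map_add' := fun a b => map_add D a b
      map_smul' := fun a b => by
        simp only [Algebra.smul_def, Derivation.leibniz, RingHom.id_apply, smul_eq_mul]
        have : D (algebraMap (Algebra.adjoin k (Set.range g)) _ a) = 0 := hDA _ a.2
        rw [this]; simp
      map_one_eq_zero' := D.map_one_eq_zero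
      leibniz' := D.leibniz }
  apply hw0
  funext i
  have h1 : D (X i) = 0 := aux_alg D' (X i) (halg.isAlgebraic _)
  rw [hD, Finset.sum_eq_single i] at h1
  · simpa using h1
  · intro b _ hb
    rw [pderiv_X_of_ne hb.symm, mul_zero]
  · simp

/-- Proposition 2.4 of the paper: the Hessian polynomial of a homogeneous polynomial `f`
vanishes identically iff the partial derivatives of `f` are algebraically dependent
over `k`. -/
theorem stmt14 {k : Type*} [Field k] [CharZero k] (n d : ℕ)
    (f : MvPolynomial (Fin (n + 1)) k) (hhom : f.IsHomogeneous d) :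
    hessianDet f = 0 ↔ ¬ AlgebraicIndependent k (fun i => pderiv i f) := by
  constructor
  · intro h hg
    exact aux_det _ hg h
  · intro h
    by_contra hd
    exact h (aux_indep _ hd)
end

section
/- Let k be a field of characteristic zero and let f := x_0·x_3² + 2·x_1·x_3·x_4 + x_2·x_4² ∈ k[x_0, x_1, x_2, x_3, x_4]. Then: (i) the Hessian polynomial h_f of f, the determinant of the 5×5 matrix of second partial derivatives of f, is identically zero; and (ii) the five partial derivatives ∂f/∂x_0,…,∂f/∂x_4 are linearly independent over k, so that V(f) ⊂ P^4 is not a cone. Hence f is a counterexample to Hesse's claim in P^4. -/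
open MvPolynomial

/-- The Gordan–Noether cubic `f = x₀x₃² + 2x₁x₃x₄ + x₂x₄²` in `ℙ⁴` has identically
vanishing Hessian, yet its five partial derivatives are linearly independent over `k`,
so `V(f)` is not a cone: a counterexample to Hesse's claim. -/
theorem stmt16 {k : Type*} [Field k] [CharZero k]
    (f : MvPolynomial (Fin 5) k)
    (hf : f = X 0 * X 3 ^ 2 + 2 * X 1 * X 3 * X 4 + X 2 * X 4 ^ 2) :
    hessianDet f = 0 ∧
      ∀ c : Fin 5 → k, ∑ i, c i • pderiv i f = 0 → c = 0 := by
  have hC : (2 : MvPolynomial (Fin 5) k) = C 2 := (map_ofNat C 2).symm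
  have h0 : pderiv 0 f = X 3 ^ 2 := by
    subst hf
    rw [hC]
    simp [pderiv_X, Derivation.leibniz_pow]
  have h1 : pderiv 1 f = C 2 * X 3 * X 4 := by
    subst hf
    rw [hC]
    simp [pderiv_X, Derivation.leibniz_pow]
    simp only [← hC]; ring
  have h2 : pderiv 2 f = X 4 ^ 2 := by
    subst hf
    rw [hC]
    simp [pderiv_X, Derivation.leibniz_pow]
  have h3 : pderiv 3 f = C 2 * (X 0 * X 3) + C 2 * (X 1 * X 4) := by
    subst hf
    rw [hC]
    simp [pderiv_X, Derivation.leibniz_pow]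
    simp only [← hC]; ring
  have h4 : pderiv 4 f = C 2 * (X 1 * X 3) + C 2 * (X 2 * X 4) := by
    subst hf
    rw [hC]
    simp [pderiv_X, Derivation.leibniz_pow]
    simp only [← hC]; ring
  constructor
  · unfold hessianDet
    rw [← Matrix.exists_mulVec_eq_zero_iff]
    refine ⟨![X 4 ^ 2, - (X 3 * X 4), X 3 ^ 2, 0, 0], ?_, ?_⟩
    · intro h
      have := congrFun h 0
      simp at this
    · funext i
      simp only [Matrix.mulVec, dotProduct, Fin.sum_univ_five, Matrix.of_apply, h0, h1, h2, h3, h4]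
      fin_cases i <;>
        simp [pderiv_X, Derivation.leibniz_pow] <;>
        simp only [map_ofNat] <;> ring
  · intro c hc
    rw [Fin.sum_univ_five, h0, h1, h2, h3, h4] at hc
    have e := fun v : Fin 5 → k => congrArg (eval v) hc
    have e1 := e ![0, 0, 0, 1, 0]
    have e2 := e ![0, 0, 0, 0, 1]
    have e3 := e ![0, 0, 0, 1, 1]
    have e4 := e ![1, 0, 0, 1, 0]
    have e5 := e ![0, 0, 1, 0, 1]
    simp [smul_eval] at e1 e2 e3 e4 e5
    funext i
    fin_cases i <;> simp_all
end
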